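/- Let D be an ADF. Every strongly admissible interpretation w of D satisfies w ≤_i grd(D); that is, the grounded interpretation is the greatest strongly admissible interpretation of D with respect to ≤_i. -/

import Mathlib

/-- Three truth values: true, false, undecided. -/
inductive TV : Type
  | t | f | u
deriving DecidableEq, Repr

/-- The information order on truth values: u <_i t and u <_i f. -/
def TV.ile (x y : TV) : Prop := x = TV.u ∨ x = y

/-- The information order on interpretations, extended pointwise. -/
def ILE {A : Type*} (v w : A → TV) : Prop := ∀ a, TV.ile (v a) (w a)

/-- An abstract dialectical framework on a set of arguments `A`:
each argument `a` has an acceptance condition `C a : (A → Bool) → Bool`. -/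
structure ADF (A : Type*) where
  C : A → (A → Bool) → Bool

/-- The trivial interpretation mapping every argument to undecided. -/
def trivialInterp (A : Type*) : A → TV := fun _ => TV.u

/-- The parents of `a` are the arguments on which its acceptance condition depends. -/
def ADF.parents {A : Type*} [DecidableEq A] (D : ADF A) (a : A) : Set A :=
  {b | ∃ w : A → Bool, D.C a w ≠ D.C a (Function.update w b (!w b))}

/-- A two-valued assignment `w` completes a three-valued interpretation `v`. -/
def Completes {A : Type*} (w : A → Bool) (v : A → TV) : Prop :=
  ∀ b, (v b = TV.t → w b = true) ∧ (v b = TV.f → w b = false)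

/-- `φ` is irrefutable under `v`: every completion of `v` makes `φ` true. -/
def Irrefutable {A : Type*} (φ : (A → Bool) → Bool) (v : A → TV) : Prop :=
  ∀ w : A → Bool, Completes w v → φ w = true

/-- `φ` is unsatisfiable under `v`: every completion of `v` makes `φ` false. -/
def Unsat {A : Type*} (φ : (A → Bool) → Bool) (v : A → TV) : Prop :=
  ∀ w : A → Bool, Completes w v → φ w = false

open Classical in
/-- The characteristic operator Γ_D of an ADF. -/
noncomputable def Gamma {A : Type*} (D : ADF A) (v : A → TV) : A → TV := fun a =>
  if Irrefutable (D.C a) v then TV.t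
  else if Unsat (D.C a) v then TV.f
  else TV.u

open Classical in
/-- `v|_P`: agrees with `v` on `P` and is undecided elsewhere. -/
noncomputable def restrictTV {A : Type*} (v : A → TV) (P : Set A) : A → TV :=
  fun b => if b ∈ P then v b else TV.u

/-- Strong acceptability/deniability of an argument with respect to interpretation `v`
and set `S`, relative to an excluded set `E` (the first index). An argument `a` with
`v a = t` (resp. `v a = f`) is strongly acceptable (resp. strongly deniable) iff there is
`P ⊆ (parents a ∩ S) \ E` with `φ_a^{v|_P}` irrefutable (resp. unsatisfiable) and every
`p ∈ P` strongly acceptable/deniable relative to `E ∪ {p}`. -/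
inductive SJrel {A : Type*} [DecidableEq A] (D : ADF A) (v : A → TV) (S : Set A) :
    Set A → A → Prop
  | acc (E : Set A) (a : A) (P : Set A)
      (ha : v a = TV.t)
      (hP : P ⊆ (D.parents a ∩ S) \ E)
      (hirr : Irrefutable (D.C a) (restrictTV v P))
      (hrec : ∀ p ∈ P, SJrel D v S (E ∪ {p}) p) : SJrel D v S E a
  | den (E : Set A) (a : A) (P : Set A)
      (ha : v a = TV.f)
      (hP : P ⊆ (D.parents a ∩ S) \ E)
      (hunsat : Unsat (D.C a) (restrictTV v P))
      (hrec : ∀ p ∈ P, SJrel D v S (E ∪ {p}) p) : SJrel D v S E a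

/-- `a` is strongly acceptable/deniable w.r.t. `v` and `S`
(i.e., relative to the excluded set `{a}`). -/
def StronglyJustified {A : Type*} [DecidableEq A] (D : ADF A) (v : A → TV)
    (S : Set A) (a : A) : Prop :=
  SJrel D v S {a} a

/-- `S` is a least set for `a` with respect to `v`. -/
def LeastSet {A : Type*} [DecidableEq A] (D : ADF A) (v : A → TV)
    (a : A) (S : Set A) : Prop :=
  StronglyJustified D v S a ∧
  ∀ S' : Set A, S'.ncard < S.ncard → ¬ StronglyJustified D v S' a

/-- An interpretation is strongly admissible iff every argument assigned `t`/`f`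
is strongly acceptable/deniable w.r.t. `v` and some set `S`. -/
def StronglyAdmissible {A : Type*} [DecidableEq A] (D : ADF A) (v : A → TV) : Prop :=
  ∀ a : A, v a ≠ TV.u → ∃ S : Set A, StronglyJustified D v S a

/-- `g` is the grounded interpretation of `D`: the least fixed point of `Γ_D`. -/
def IsGrounded {A : Type*} (D : ADF A) (g : A → TV) : Prop :=
  Gamma D g = g ∧ ∀ w : A → TV, Gamma D w = w → ILE g w

/-- An interpretation is admissible iff `v ≤_i Γ_D(v)`. -/
def Admissible {A : Type*} (D : ADF A) (v : A → TV) : Prop :=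
  ILE v (Gamma D v)

/-- An interpretation is conflict-free. -/
def ConflictFree {A : Type*} (D : ADF A) (v : A → TV) : Prop :=
  ∀ a : A, (v a = TV.t → ∃ w : A → Bool, Completes w v ∧ D.C a w = true) ∧
           (v a = TV.f → Unsat (D.C a) v)

/-- The join of two interpretations: take `v`'s value where defined, else `w`'s. -/
def joinI {A : Type*} (v w : A → TV) : A → TV :=
  fun a => if v a = TV.u then w a else v a

/-!
Only the decided arguments of an excluded set matter. So when `Gamma D` newly decides an argument
`a` from a strongly admissible `v`, the justifications inside `v` of its parents survive the
exclusion of `a`, which `v` leaves undecided; hence `Gamma D` preserves strong admissibility.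

On the other hand a justification is a well-founded derivation, and every interpretation `g` with
`Gamma D g ≤ g` reproduces it from the leaves up, so `g` lies above all strongly admissible
interpretations. The part of `g` covered by these is therefore their join. It is itself strongly
admissible, hence the greatest such interpretation, hence a fixed point of `Gamma D`. When `g` is
the least fixed point, that join is all of `g`.
-/

section Interpretation

variable {A : Type*} {v v' w : A → TV} {P : Set A} {a : A}

theorem ILE.eq_of_ne (h : ILE v w) (ha : v a ≠ TV.u) : w a = v a :=
  ((h a).resolve_left ha).symm

theorem ILE.refl (v : A → TV) : ILE v v := fun _ => Or.inr rfl

theorem ILE.antisymm (h : ILE v w) (h' : ILE w v) : v = w :=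
  funext fun a => (h a).elim (fun hv => (h' a).elim (hv.trans ·.symm) Eq.symm) id

theorem restrictTV_of_mem (ha : a ∈ P) : restrictTV v P a = v a := if_pos ha

theorem restrictTV_of_notMem (ha : a ∉ P) : restrictTV v P a = TV.u := if_neg ha

theorem restrictTV_le (h : ∀ p ∈ P, TV.ile (v p) (w p)) : ILE (restrictTV v P) w := by
  intro b
  by_cases hb : b ∈ P
  · simpa only [restrictTV_of_mem hb] using h b hb
  · exact Or.inl (restrictTV_of_notMem hb)

theorem restrictTV_le_self (v : A → TV) (P : Set A) : ILE (restrictTV v P) v :=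
  restrictTV_le fun p _ => ILE.refl v p

theorem ILE.restrictTV (h : ILE v w) (P : Set A) : ILE (restrictTV v P) (restrictTV w P) :=
  restrictTV_le fun p hp => by simpa only [restrictTV_of_mem hp] using h p

theorem exists_completes (v : A → TV) : ∃ x, Completes x v :=
  ⟨fun b => decide (v b = TV.t), fun b => by constructor <;> intro h <;> simp [h]⟩

theorem Completes.of_le {x : A → Bool} (hx : Completes x w) (h : ILE v w) : Completes x v := by
  intro b
  rcases h b with hb | hb
  · simp [hb]
  · exact hb ▸ hx b

theorem Completes.exists_eqOn {x : A → Bool} (hx : Completes x v) (h : Set.EqOn v v' P) :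
    ∃ y, Completes y v' ∧ Set.EqOn x y P := by
  classical
  obtain ⟨c, hc⟩ := exists_completes v'
  refine ⟨P.piecewise x c, fun b => ?_, (P.piecewise_eqOn x c).symm⟩
  by_cases hb : b ∈ P
  · simpa only [Set.piecewise_eq_of_mem _ _ _ hb, ← h hb] using hx b
  · simpa only [Set.piecewise_eq_of_notMem _ _ _ hb] using hc b

theorem forall_completes_congr {β : Type*} {φ : (A → Bool) → β} (hφ : DependsOn φ P)
    (h : Set.EqOn v v' P) (y : β) :
    (∀ x, Completes x v → φ x = y) ↔ ∀ x, Completes x v' → φ x = y := by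
  constructor <;> intro hy x hx
  · obtain ⟨x', hx', hxx'⟩ := hx.exists_eqOn h.symm
    exact (hφ hxx').trans (hy x' hx')
  · obtain ⟨x', hx', hxx'⟩ := hx.exists_eqOn h
    exact (hφ hxx').trans (hy x' hx')

end Interpretation

section CharacteristicOperator

variable {A : Type*} {D : ADF A} {v w : A → TV} {a : A}

theorem Irrefutable.not_unsat {φ : (A → Bool) → Bool} (h : Irrefutable φ v) : ¬ Unsat φ v := by
  intro h'
  obtain ⟨x, hx⟩ := exists_completes v
  exact Bool.false_ne_true ((h' x hx).symm.trans (h x hx))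

theorem gamma_eq_t_iff : Gamma D v a = TV.t ↔ Irrefutable (D.C a) v := by
  unfold Gamma
  split_ifs <;> simp_all

theorem gamma_eq_f_iff : Gamma D v a = TV.f ↔ Unsat (D.C a) v := by
  have := Irrefutable.not_unsat (φ := D.C a) (v := v)
  unfold Gamma
  split_ifs <;> simp_all

theorem ILE.gamma (h : ILE v w) (D : ADF A) : ILE (Gamma D v) (Gamma D w) := by
  intro a
  cases ha : Gamma D v a with
  | u => exact Or.inl rfl
  | t => exact Or.inr (gamma_eq_t_iff.2 fun x hx => gamma_eq_t_iff.1 ha x (hx.of_le h)).symm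
  | f => exact Or.inr (gamma_eq_f_iff.2 fun x hx => gamma_eq_f_iff.1 ha x (hx.of_le h)).symm

theorem gamma_congr {P : Set A} (hP : DependsOn (D.C a) P) (h : Set.EqOn v w P) :
    Gamma D v a = Gamma D w a := by
  classical
  exact if_congr (forall_completes_congr hP h true) rfl
    (if_congr (forall_completes_congr hP h false) rfl rfl)

end CharacteristicOperator

section Parents

theorem dependsOn_of_update_eq {ι β : Type*} {α : ι → Type*} [Finite ι] [DecidableEq ι]
    {f : (∀ i, α i) → β} {s : Set ι}
    (h : ∀ i ∉ s, ∀ x y, f (Function.update x i y) = f x) : DependsOn f s := by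
  intro x y hxy
  have := Fintype.ofFinite ι
  suffices key : ∀ t : Finset ι, f (t.piecewise y x) = f x by
    simpa using (key Finset.univ).symm
  intro t
  induction t using Finset.induction_on with
  | empty => simp
  | insert i t hi ih =>
    rw [Finset.piecewise_insert]
    by_cases his : i ∈ s
    · have hval : y i = t.piecewise y x i := by simp [hi, hxy i his]
      rwa [hval, Function.update_eq_self]
    · rwa [h i his]

/-- Parents detect single flips only: over infinitely many arguments, the condition that infinitely
many of them are true has no parents, although it is not constant. -/
theorem ADF.dependsOn_parents {A : Type*} [Finite A] [DecidableEq A] (D : ADF A) (a : A) :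
    DependsOn (D.C a) (D.parents a) := by
  refine dependsOn_of_update_eq fun b hb x y => ?_
  have hflip : D.C a x = D.C a (Function.update x b (!x b)) :=
    not_not.1 fun hne => hb ⟨x, hne⟩
  rcases Bool.eq_or_eq_not y (x b) with rfl | rfl
  · rw [Function.update_eq_self]
  · exact hflip.symm

end Parents

section Justification

variable {A : Type*} [DecidableEq A] {D : ADF A} {v w : A → TV} {S S' E E' : Set A} {a : A}

theorem SJrel.of_gamma_eq {P : Set A} (ha : v a ≠ TV.u) (hP : P ⊆ (D.parents a ∩ S) \ E)
    (hΓ : Gamma D (restrictTV v P) a = v a) (hrec : ∀ p ∈ P, SJrel D v S (E ∪ {p}) p) :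
    SJrel D v S E a := by
  cases hv : v a with
  | u => exact absurd hv ha
  | t => exact .acc E a P hv hP (gamma_eq_t_iff.1 (hΓ.trans hv)) hrec
  | f => exact .den E a P hv hP (gamma_eq_f_iff.1 (hΓ.trans hv)) hrec

/-- Acceptance and denial become a single case, because `Gamma` expresses both. -/
@[elab_as_elim]
theorem SJrel.gamma_induction {motive : ∀ E a, SJrel D v S E a → Prop}
    (step : ∀ E a P (ha : v a ≠ TV.u) (hP : P ⊆ (D.parents a ∩ S) \ E)
      (hΓ : Gamma D (restrictTV v P) a = v a) (hrec : ∀ p ∈ P, SJrel D v S (E ∪ {p}) p),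
      (∀ p (hp : p ∈ P), motive (E ∪ {p}) p (hrec p hp)) →
        motive E a (.of_gamma_eq ha hP hΓ hrec))
    (h : SJrel D v S E a) : motive E a h := by
  induction h with
  | acc E a P ha hP hirr hrec ih =>
    exact step E a P (by simp [ha]) hP ((gamma_eq_t_iff.2 hirr).trans ha.symm) hrec ih
  | den E a P ha hP hunsat hrec ih =>
    exact step E a P (by simp [ha]) hP ((gamma_eq_f_iff.2 hunsat).trans ha.symm) hrec ih

theorem SJrel.ne_u (h : SJrel D v S E a) : v a ≠ TV.u := by
  cases h <;> simp [*]

theorem SJrel.mono (h : SJrel D v S E a) (hvw : ILE v w) (hS : S ⊆ S') : SJrel D w S' E a := by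
  induction h using SJrel.gamma_induction with
  | step E a P ha hP hΓ _ ih =>
    have hwa : w a = v a := hvw.eq_of_ne ha
    have hΓw : Gamma D (restrictTV w P) a = v a :=
      (((hvw.restrictTV P).gamma D).eq_of_ne (hΓ ▸ ha)).trans hΓ
    exact .of_gamma_eq (hwa ▸ ha)
      (hP.trans (Set.sdiff_subset_sdiff_left (Set.inter_subset_inter_right _ hS)))
      (hΓw.trans hwa.symm) ih

theorem SJrel.anti_excluded (h : SJrel D v S E a) (hE : ∀ e ∈ E', v e ≠ TV.u → e ∈ E) :
    SJrel D v S E' a := by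
  induction h using SJrel.gamma_induction generalizing E' with
  | step E a P ha hP hΓ hrec ih =>
    refine .of_gamma_eq ha (fun p hp => ⟨(hP hp).1, fun hpE' => ?_⟩) hΓ fun p hp => ih p hp ?_
    · exact (hP hp).2 (hE p hpE' (hrec p hp).ne_u)
    · rintro e (he | he) hev
      · exact Or.inl (hE e he hev)
      · exact Or.inr he

theorem SJrel.gamma_eq (h : SJrel D v S E a) : Gamma D v a = v a := by
  induction h using SJrel.gamma_induction with
  | step _ a P ha _ hΓ _ _ =>
    exact (((restrictTV_le_self v P).gamma D).eq_of_ne (hΓ ▸ ha)).trans hΓ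

theorem SJrel.eq_of_gamma_le (h : SJrel D v S E a) (hw : ILE (Gamma D w) w) : w a = v a := by
  induction h using SJrel.gamma_induction with
  | step _ a P ha _ hΓ _ ih =>
    have hPw : ILE (restrictTV v P) w := restrictTV_le fun p hp => Or.inr (ih p hp).symm
    have hΓw : Gamma D w a = v a := ((hPw.gamma D).eq_of_ne (hΓ ▸ ha)).trans hΓ
    exact (hw.eq_of_ne (hΓw ▸ ha)).trans hΓw

end Justification

section StrongAdmissibility

variable {A : Type*} [DecidableEq A] {D : ADF A} {v w : A → TV}

theorem StronglyAdmissible.admissible (hv : StronglyAdmissible D v) : Admissible D v := by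
  intro a
  by_cases ha : v a = TV.u
  · exact Or.inl ha
  · obtain ⟨S, hS⟩ := hv a ha
    exact Or.inr hS.gamma_eq.symm

theorem StronglyAdmissible.le_of_gamma_le (hv : StronglyAdmissible D v)
    (hw : ILE (Gamma D w) w) : ILE v w := by
  intro a
  by_cases ha : v a = TV.u
  · exact Or.inl ha
  · obtain ⟨S, hS⟩ := hv a ha
    exact Or.inr (hS.eq_of_gamma_le hw).symm

theorem stronglyAdmissible_of_forall_exists_le
    (h : ∀ a, w a ≠ TV.u → ∃ v, StronglyAdmissible D v ∧ ILE v w ∧ v a ≠ TV.u) :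
    StronglyAdmissible D w := by
  intro a ha
  obtain ⟨v, hv, hvw, hva⟩ := h a ha
  obtain ⟨S, hS⟩ := hv a hva
  exact ⟨S, hS.mono hvw subset_rfl⟩

theorem StronglyAdmissible.gamma (hv : StronglyAdmissible D v)
    (hD : ∀ a, DependsOn (D.C a) (D.parents a)) : StronglyAdmissible D (Gamma D v) := by
  intro a ha
  have hle : ILE v (Gamma D v) := hv.admissible
  by_cases hva : v a = TV.u
  · let P : Set A := {p | p ∈ D.parents a ∧ v p ≠ TV.u}
    have hPv : Set.EqOn v (restrictTV v P) (D.parents a) := fun p hp => by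
      by_cases hvp : v p = TV.u <;> simp [restrictTV, P, hp, hvp]
    have hΓv : Gamma D v a = Gamma D (restrictTV v P) a := gamma_congr (hD a) hPv
    have hΓ : Gamma D (restrictTV (Gamma D v) P) a = Gamma D v a :=
      (((hle.restrictTV P).gamma D).eq_of_ne (hΓv ▸ ha)).trans hΓv.symm
    have hrec : ∀ p ∈ P, SJrel D (Gamma D v) Set.univ ({a} ∪ {p}) p := by
      rintro p ⟨-, hvp⟩
      obtain ⟨S, hS⟩ := hv p hvp
      have hexcl : SJrel D v S ({a} ∪ {p}) p := hS.anti_excluded fun e he hve =>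
        he.resolve_left fun hea => hve (hea ▸ hva)
      exact hexcl.mono hle (Set.subset_univ S)
    have hPa : P ⊆ (D.parents a ∩ Set.univ) \ {a} :=
      fun p hp => ⟨⟨hp.1, Set.mem_univ p⟩, fun hpa => hp.2 (hpa ▸ hva)⟩
    exact ⟨Set.univ, .of_gamma_eq ha hPa hΓ hrec⟩
  · obtain ⟨S, hS⟩ := hv a hva
    exact ⟨S, hS.mono hle subset_rfl⟩

theorem exists_stronglyAdmissible_gamma_eq {g : A → TV}
    (hD : ∀ a, DependsOn (D.C a) (D.parents a)) (hg : ILE (Gamma D g) g) :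
    ∃ v, StronglyAdmissible D v ∧ Gamma D v = v := by
  let U : Set A := {a | ∃ v, StronglyAdmissible D v ∧ v a ≠ TV.u}
  have hmax : ∀ v, StronglyAdmissible D v → ILE v (restrictTV g U) := by
    intro v hv a
    by_cases ha : v a = TV.u
    · exact Or.inl ha
    · have haU : a ∈ U := ⟨v, hv, ha⟩
      simpa only [restrictTV_of_mem haU] using hv.le_of_gamma_le hg a
  have hU : StronglyAdmissible D (restrictTV g U) := by
    refine stronglyAdmissible_of_forall_exists_le fun a ha => ?_
    obtain ⟨v, hv, hva⟩ : a ∈ U := by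
      contrapose! ha
      exact restrictTV_of_notMem ha
    exact ⟨v, hv, hmax v hv, hva⟩
  exact ⟨restrictTV g U, hU, (hmax _ (hU.gamma hD)).antisymm hU.admissible⟩

theorem grounded_greatest_strongly_admissible_general {g : A → TV}
    (hD : ∀ a, DependsOn (D.C a) (D.parents a)) (hg : IsGrounded D g) :
    StronglyAdmissible D g ∧ ∀ w : A → TV, StronglyAdmissible D w → ILE w g := by
  have hle : ILE (Gamma D g) g := hg.1.symm ▸ ILE.refl g
  obtain ⟨v, hv, hfix⟩ := exists_stronglyAdmissible_gamma_eq hD hle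
  have hgv : g = v := (hg.2 v hfix).antisymm (hv.le_of_gamma_le hle)
  exact ⟨hgv ▸ hv, fun w hw => hw.le_of_gamma_le hle⟩

end StrongAdmissibility

/-- The grounded interpretation is the greatest strongly admissible
interpretation: it is strongly admissible and every strongly admissible
interpretation is ≤_i below it. -/
theorem grounded_greatest_strongly_admissible {A : Type*} [Fintype A] [DecidableEq A]
    (D : ADF A) (g : A → TV) (hg : IsGrounded D g) :
    StronglyAdmissible D g ∧ ∀ w : A → TV, StronglyAdmissible D w → ILE w g := by
  exact grounded_greatest_strongly_admissible_general D.dependsOn_parents hg
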